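/- Let W be a real inner product space, r ∈ (1,∞), and r̂ := min(r,2). Let ς : [0,∞) → ℝ be continuous, suppose the map α ↦ α·ς(α) is differentiable on (0,∞), and suppose there exist real numbers ς_de ≥ 0 and ς_sm, ς_hc > 0 such that for all α > 0 one has ς_sm·(ς_de^r + α^r)^((r−2)/r) ≤ d/dα(α·ς(α)) ≤ ς_hc·(ς_de^r + α^r)^((r−2)/r). Define σ : W → W by σ(τ) := ς(‖τ‖_W)·τ. Then there exists a constant C > 0 depending only on r such that for all τ, η ∈ W with τ ≠ η: ‖σ(τ) − σ(η)‖_W ≤ C·ς_hc·(ς_de^r + ‖τ‖_W^r + ‖η‖_W^r)^((r−2)/r)·‖τ − η‖_W. -/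

import Mathlib

open Real

/-! Put `g α = α ς(α)`, let `w t = (d ^ r + t ^ r) ^ ((r - 2) / r)` be the frame weight, and let
`‖η‖ ≤ ‖τ‖ = a`. For `t ≤ a` one has `w t ≤ w a (a / t) ^ (2 - min r 2)`, an integrable singularity
because `min r 2 > 1`; integrating the bound on `g'` shows that the increments of `g` down from `a`
are Lipschitz with constant of order `w a`. The splitting
`σ τ - σ η = ς(‖τ‖) (τ - η) + (ς(‖τ‖) - ς(‖η‖)) η` transfers this to `σ`. Finally
`d ^ r + a ^ r` and `d ^ r + ‖τ‖ ^ r + ‖η‖ ^ r` differ by at most a factor of two. -/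

/-- The weight `(d ^ r + t ^ r) ^ ((r - 2) / r)` framing the derivative of an `r`-power-framed
function, with degeneracy shift `d`. -/
noncomputable def frameWeight (r d t : ℝ) : ℝ :=
  (d ^ r + t ^ r) ^ ((r - 2) / r)

/-- The constant, depending on `r` alone, in the Hölder estimate `stmt0_general`. -/
noncomputable def frameConst (r : ℝ) : ℝ :=
  2 * (2 ^ |(r - 2) / r| / (min r 2 - 1))

lemma frameConst_pos {r : ℝ} (hr : 1 < r) : 0 < frameConst r := by
  have : 0 < min r 2 - 1 := sub_pos.2 (lt_min hr one_lt_two)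
  unfold frameConst
  positivity

lemma frameWeight_nonneg {r d t : ℝ} (hd : 0 ≤ d) (ht : 0 ≤ t) : 0 ≤ frameWeight r d t := by
  unfold frameWeight
  positivity

lemma frameWeight_le_mul_div_rpow {r d t a : ℝ} (hr : 0 < r) (hd : 0 ≤ d) (ht : 0 < t)
    (hta : t ≤ a) : frameWeight r d t ≤ frameWeight r d a * (a / t) ^ (2 - min r 2) := by
  have ha : 0 < a := ht.trans_le hta
  unfold frameWeight
  rcases le_total 2 r with h2 | h2
  · have : 0 ≤ (r - 2) / r := div_nonneg (sub_nonneg.2 h2) hr.le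
    rw [min_eq_right h2, sub_self, rpow_zero, mul_one]
    gcongr
  · have he : (r - 2) / r ≤ 0 := div_nonpos_of_nonpos_of_nonneg (sub_nonpos.2 h2) hr.le
    have hratio : (a / t) ^ (2 - r) = ((t / a) ^ r) ^ ((r - 2) / r) := by
      rw [← rpow_mul (by positivity), mul_div_cancel₀ _ hr.ne', ← inv_div, inv_rpow (by positivity),
        ← rpow_neg (by positivity), neg_sub]
    have hbase : (d ^ r + a ^ r) * (t / a) ^ r ≤ d ^ r + t ^ r := calc
      _ = d ^ r * (t / a) ^ r + t ^ r := by
        rw [add_mul, ← mul_rpow ha.le (by positivity), mul_div_cancel₀ _ ha.ne']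
      _ ≤ d ^ r + t ^ r := by
        gcongr
        exact mul_le_of_le_one_right (by positivity)
          (rpow_le_one (by positivity) ((div_le_one ha).2 hta) hr.le)
    rw [min_eq_left h2, hratio, ← mul_rpow (by positivity) (by positivity)]
    exact rpow_le_rpow_of_nonpos (by positivity) hbase he

lemma rpow_le_two_rpow_abs_mul_add_rpow {x y : ℝ} (hy : 0 ≤ y) (hyx : y ≤ x) (e : ℝ) :
    x ^ e ≤ 2 ^ |e| * (x + y) ^ e := by
  have hx : 0 ≤ x := hy.trans hyx
  rcases le_total 0 e with he | he
  · calc x ^ e ≤ (x + y) ^ e := rpow_le_rpow hx (le_add_of_nonneg_right hy) he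
      _ ≤ 2 ^ |e| * (x + y) ^ e :=
        le_mul_of_one_le_left (by positivity) (one_le_rpow one_le_two (abs_nonneg e))
  · rcases hx.eq_or_lt with rfl | hx
    · rw [le_antisymm hyx hy, add_zero]
      exact le_mul_of_one_le_left (by positivity) (one_le_rpow one_le_two (abs_nonneg e))
    · calc x ^ e = 2 ^ |e| * (2 * x) ^ e := by
            rw [abs_of_nonpos he, mul_rpow zero_le_two hx.le, ← mul_assoc,
              ← rpow_add two_pos, neg_add_cancel, rpow_zero, one_mul]
        _ ≤ 2 ^ |e| * (x + y) ^ e := by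
            gcongr 2 ^ |e| * ?_
            exact rpow_le_rpow_of_nonpos (by positivity) (by linarith) he

lemma frameWeight_le_two_rpow_abs_mul {r d a b : ℝ} (hr : 0 ≤ r) (hd : 0 ≤ d) (hb : 0 ≤ b)
    (hba : b ≤ a) :
    frameWeight r d a ≤ 2 ^ |(r - 2) / r| * (d ^ r + a ^ r + b ^ r) ^ ((r - 2) / r) :=
  rpow_le_two_rpow_abs_mul_add_rpow (by positivity)
    ((rpow_le_rpow hb hba hr).trans (le_add_of_nonneg_left (by positivity))) _

lemma rpow_mul_rpow_sub_rpow_le_sub {a b q : ℝ} (hb : 0 ≤ b) (hba : b ≤ a) (hq : 0 ≤ q)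
    (hq1 : q < 1) : a ^ q * (a ^ (1 - q) - b ^ (1 - q)) ≤ a - b := by
  have rpow_mul_self : ∀ x : ℝ, 0 ≤ x → x ^ q * x ^ (1 - q) = x := fun x hx => by
    rw [← rpow_add_of_nonneg hx hq (sub_pos.2 hq1).le, add_sub_cancel, rpow_one]
  have hb_le : b ≤ a ^ q * b ^ (1 - q) := calc
    b = b ^ q * b ^ (1 - q) := (rpow_mul_self b hb).symm
    _ ≤ a ^ q * b ^ (1 - q) := by gcongr
  rw [mul_sub, rpow_mul_self a (hb.trans hba)]
  exact sub_le_sub_left hb_le a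

lemma sub_le_of_deriv_le_mul_div_rpow {g : ℝ → ℝ} {a b q M : ℝ} (hb : 0 ≤ b) (hba : b ≤ a)
    (hq : 0 ≤ q) (hq1 : q < 1) (hM : 0 ≤ M) (hcont : ContinuousOn g (Set.Icc b a))
    (hdiff : ∀ t ∈ Set.Ioo b a, DifferentiableAt ℝ g t)
    (hderiv : ∀ t ∈ Set.Ioo b a, deriv g t ≤ M * (a / t) ^ q) :
    g a - g b ≤ M / (1 - q) * (a - b) := by
  have ha : 0 ≤ a := hb.trans hba
  have : 0 < 1 - q := sub_pos.2 hq1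
  have hint : MeasureTheory.IntegrableOn (fun t : ℝ => M * a ^ q * t ^ (-q)) (Set.Icc b a) :=
    (intervalIntegrable_iff_integrableOn_Icc_of_le hba).1
      ((intervalIntegral.intervalIntegrable_rpow' (by linarith)).const_mul _)
  calc g a - g b ≤ ∫ t in b..a, M * a ^ q * t ^ (-q) := by
        refine intervalIntegral.sub_le_integral_of_hasDeriv_right_of_le hba hcont
          (fun t ht => (hdiff t ht).hasDerivAt.hasDerivWithinAt) hint fun t ht => ?_
        have ht0 : 0 ≤ t := hb.trans ht.1.le
        refine (hderiv t ht).trans_eq ?_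
        rw [div_rpow ha ht0, rpow_neg ht0, mul_assoc, div_eq_mul_inv]
    _ = M / (1 - q) * (a ^ q * (a ^ (1 - q) - b ^ (1 - q))) := by
        rw [intervalIntegral.integral_const_mul, integral_rpow (Or.inl (by linarith)),
          neg_add_eq_sub]
        ring
    _ ≤ M / (1 - q) * (a - b) := by
        gcongr
        exact rpow_mul_rpow_sub_rpow_le_sub hb hba hq hq1

lemma sub_le_of_deriv_le_frameWeight {g : ℝ → ℝ} {r d h a b : ℝ} (hr : 1 < r) (hd : 0 ≤ d)
    (hh : 0 ≤ h) (hb : 0 ≤ b) (hba : b ≤ a) (hcont : ContinuousOn g (Set.Icc b a))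
    (hdiff : ∀ t ∈ Set.Ioo b a, DifferentiableAt ℝ g t)
    (hderiv : ∀ t ∈ Set.Ioo b a, deriv g t ≤ h * frameWeight r d t) :
    g a - g b ≤ h * frameWeight r d a / (min r 2 - 1) * (a - b) := by
  have hmin : 1 < min r 2 := lt_min hr one_lt_two
  have hincr := sub_le_of_deriv_le_mul_div_rpow (q := 2 - min r 2) (M := h * frameWeight r d a)
    hb hba (sub_nonneg.2 (min_le_right r 2)) (by linarith)
    (mul_nonneg hh (frameWeight_nonneg hd (hb.trans hba))) hcont hdiff fun t ht => by
      rw [mul_assoc]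
      exact (hderiv t ht).trans (mul_le_mul_of_nonneg_left
        (frameWeight_le_mul_div_rpow (by linarith) hd (hb.trans_lt ht.1) ht.2.le) hh)
  rwa [show 1 - (2 - min r 2) = min r 2 - 1 by ring] at hincr

section Radial

variable {W : Type*} [SeminormedAddCommGroup W] [NormedSpace ℝ W]

lemma norm_radial_sub_le_of_sub_mem_Icc {ς : ℝ → ℝ} {K : ℝ} {τ η : W} (hητ : ‖η‖ ≤ ‖τ‖)
    (hincr : ∀ b ∈ Set.Icc 0 ‖τ‖, ‖τ‖ * ς ‖τ‖ - b * ς b ∈ Set.Icc 0 (K * (‖τ‖ - b))) :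
    ‖ς ‖τ‖ • τ - ς ‖η‖ • η‖ ≤ 2 * K * ‖τ - η‖ := by
  rcases (norm_nonneg τ).eq_or_lt with hτ | hτ
  · have hη : ‖η‖ = 0 := le_antisymm (hητ.trans_eq hτ.symm) (norm_nonneg η)
    have hsub : ‖τ - η‖ = 0 :=
      le_antisymm ((norm_sub_le τ η).trans_eq (by rw [← hτ, hη, add_zero])) (norm_nonneg _)
    rw [← hτ, hη, ← smul_sub, norm_smul, hsub, mul_zero, mul_zero]
  · obtain ⟨hς, hςK⟩ : 0 ≤ ς ‖τ‖ ∧ ς ‖τ‖ ≤ K := by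
      have hzero := hincr 0 ⟨le_rfl, hτ.le⟩
      rw [zero_mul, sub_zero, sub_zero, mul_comm K] at hzero
      exact ⟨nonneg_of_mul_nonneg_right hzero.1 hτ, le_of_mul_le_mul_left hzero.2 hτ⟩
    have hK : 0 ≤ K := hς.trans hςK
    have hgap : 0 ≤ ‖τ‖ - ‖η‖ := sub_nonneg.2 hητ
    obtain ⟨hmono, hlip⟩ := hincr ‖η‖ ⟨norm_nonneg η, hητ⟩
    have htangential : ‖ς ‖τ‖ • (τ - η)‖ ≤ K * ‖τ - η‖ := by
      rw [norm_smul, norm_of_nonneg hς]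
      gcongr
    have hradial : ‖(ς ‖τ‖ - ς ‖η‖) • η‖ ≤ K * ‖τ - η‖ := calc
      _ = |(‖τ‖ * ς ‖τ‖ - ‖η‖ * ς ‖η‖) - ς ‖τ‖ * (‖τ‖ - ‖η‖)| := by
        rw [norm_smul, norm_eq_abs, ← abs_norm η, ← abs_mul, abs_norm]
        congr 1
        ring
      _ ≤ K * (‖τ‖ - ‖η‖) :=
        abs_sub_le_of_nonneg_of_le hmono hlip (mul_nonneg hς hgap)
          (mul_le_mul_of_nonneg_right hςK hgap)
      _ ≤ K * ‖τ - η‖ := by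
        gcongr
        exact norm_sub_norm_le τ η
    calc ‖ς ‖τ‖ • τ - ς ‖η‖ • η‖ = ‖ς ‖τ‖ • (τ - η) + (ς ‖τ‖ - ς ‖η‖) • η‖ := by
          congr 1
          module
      _ ≤ K * ‖τ - η‖ + K * ‖τ - η‖ := norm_add_le_of_le htangential hradial
      _ = 2 * K * ‖τ - η‖ := by ring

theorem stmt0_general {r d h : ℝ} {ς : ℝ → ℝ} (hr : 1 < r) (hd : 0 ≤ d)
    (hcont : ContinuousOn (fun t => t * ς t) (Set.Ici 0))
    (hdiff : ∀ t, 0 < t → DifferentiableAt ℝ (fun t => t * ς t) t)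
    (hderiv : ∀ t, 0 < t → deriv (fun t => t * ς t) t ∈ Set.Icc 0 (h * frameWeight r d t))
    (τ η : W) :
    ‖ς ‖τ‖ • τ - ς ‖η‖ • η‖ ≤
      frameConst r * h * (d ^ r + ‖τ‖ ^ r + ‖η‖ ^ r) ^ ((r - 2) / r) * ‖τ - η‖ := by
  wlog hητ : ‖η‖ ≤ ‖τ‖ generalizing τ η
  · rw [norm_sub_rev, norm_sub_rev τ, add_right_comm]
    exact this η τ (le_of_not_ge hητ)
  have hmin : 0 < min r 2 - 1 := sub_pos.2 (lt_min hr one_lt_two)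
  have hh : 0 ≤ h := by
    have hweight : 0 < frameWeight r d 1 := by
      unfold frameWeight
      positivity
    exact nonneg_of_mul_nonneg_left ((hderiv 1 one_pos).1.trans (hderiv 1 one_pos).2) hweight
  have hmono : MonotoneOn (fun t => t * ς t) (Set.Ici 0) := by
    refine monotoneOn_of_deriv_nonneg (convex_Ici 0) hcont ?_ ?_ <;> rw [interior_Ici]
    · exact fun t ht => (hdiff t ht).differentiableWithinAt
    · exact fun t ht => (hderiv t ht).1
  calc ‖ς ‖τ‖ • τ - ς ‖η‖ • η‖
      ≤ 2 * (h * frameWeight r d ‖τ‖ / (min r 2 - 1)) * ‖τ - η‖ := by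
        refine norm_radial_sub_le_of_sub_mem_Icc hητ fun b hb =>
          ⟨sub_nonneg.2 (hmono hb.1 (norm_nonneg τ) hb.2), ?_⟩
        exact sub_le_of_deriv_le_frameWeight hr hd hh hb.1 hb.2
          (hcont.mono fun t ht => hb.1.trans ht.1) (fun t ht => hdiff t (hb.1.trans_lt ht.1))
          fun t ht => (hderiv t (hb.1.trans_lt ht.1)).2
    _ ≤ 2 * (h * (2 ^ |(r - 2) / r| * (d ^ r + ‖τ‖ ^ r + ‖η‖ ^ r) ^ ((r - 2) / r)) /
          (min r 2 - 1)) * ‖τ - η‖ := by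
        gcongr
        exact frameWeight_le_two_rpow_abs_mul (by linarith) hd (norm_nonneg η) hητ
    _ = _ := by
        unfold frameConst
        ring

end Radial

/-- Hölder-continuity part of the theorem on `r`-power-framed functions
(Theorem A.1): if the radial profile `ς` has `α ↦ α ς(α)` with derivative framed
above by `ς_hc (ς_de^r + α^r)^((r-2)/r)`, then `σ(τ) = ς(‖τ‖) • τ` is Hölder
continuous with constant `C ς_hc`, `C` depending only on `r`. -/
theorem stmt0 (r : ℝ) (hr : 1 < r) :
    ∃ C : ℝ, 0 < C ∧
      ∀ (W : Type) [NormedAddCommGroup W] [InnerProductSpace ℝ W]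
        (ς : ℝ → ℝ) (ς_de ς_sm ς_hc : ℝ),
        ContinuousOn ς (Set.Ici 0) →
        (∀ α : ℝ, 0 < α → DifferentiableAt ℝ (fun t : ℝ => t * ς t) α) →
        0 ≤ ς_de → 0 < ς_sm → 0 < ς_hc →
        (∀ α : ℝ, 0 < α →
          ς_sm * (ς_de ^ r + α ^ r) ^ ((r - 2) / r) ≤ deriv (fun t : ℝ => t * ς t) α ∧
          deriv (fun t : ℝ => t * ς t) α ≤ ς_hc * (ς_de ^ r + α ^ r) ^ ((r - 2) / r)) →
        ∀ τ η : W, τ ≠ η →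
          ‖ς (‖τ‖) • τ - ς (‖η‖) • η‖ ≤
            C * ς_hc * (ς_de ^ r + ‖τ‖ ^ r + ‖η‖ ^ r) ^ ((r - 2) / r) * ‖τ - η‖ := by
  exact ⟨frameConst r, frameConst_pos hr, fun W _ _ ς d m h hς hdiff hd hm _ hframe τ η _ =>
    stmt0_general hr hd (continuousOn_id.mul hς) hdiff
      (fun α hα => ⟨(mul_nonneg hm.le (frameWeight_nonneg hd hα.le)).trans (hframe α hα).1,
        (hframe α hα).2⟩) τ η⟩
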